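/- Let 1 < α < 2, A a bounded operator on a Banach space E, and f : [0,∞) → E continuously differentiable. Then d²/dt² ∫_0^t (t-τ)^{α-1} E_{α,α}((t-τ)^α A) f(τ) dτ = J_t^{α-1} f'(t) + f(0) t^{α-2}/Γ(α-1) + A ∫_0^t (t-τ)^{2α-3} E_{α,2α-2}((t-τ)^α A) f(τ) dτ for t > 0. -/

import Mathlib

open Real MeasureTheory intervalIntegral

/-- Operator-valued two-parameter Mittag-Leffler function. -/
noncomputable def opML {E : Type*} [NormedAddCommGroup E] [NormedSpace ℝ E]
    (α β : ℝ) (A : E →L[ℝ] E) (t : ℝ) : E →L[ℝ] E :=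
  ∑' n : ℕ, (t ^ ((n : ℝ) * α) / Real.Gamma (β + n * α)) • A ^ n

open Set Filter Topology

/-!
Put `K_β(s) = s^{β-1} E_{α,β}(s^α A)`. Term by term, `K_{β+1}' = K_β` on `(0, ∞)` and
`K_β(s) = s^{β-1}/Γ(β) + A K_{β+α}(s)`. For `β > 0` the kernel `K_β` is integrable at `0`, so
`K_{β+1} = ∫_0 K_β` and Fubini gives `K_{β+1} * g = ∫_0 (K_β * g)`; hence
`(K_{β+1} * g)' = K_β * g` for every continuous `g`, although `K_β` may be singular at `0`.

The first derivative of `K_α * f` is therefore `K_{α-1} * f`. Integrating by parts to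
`K_{α-1} * f = K_α f(0) + K_α * f'` makes a second differentiation possible, with result
`K_{α-1} f(0) + K_{α-1} * f'`. Splitting off the leading term of `K_{α-1}` leaves
`A (K_{2α-1} f(0) + K_{2α-1} * f')`, and this is `A (K_{2α-2} * f)` by the same integration by
parts.
-/

lemma integrable_indicator_Ioc_of_intervalIntegrable {G : Type*} [NormedAddCommGroup G]
    {g : ℝ → G} {a b : ℝ} (hab : a ≤ b) (hg : IntervalIntegrable g volume a b) :
    Integrable ((Ioc a b).indicator g) :=
  (integrable_indicator_iff measurableSet_Ioc).2
    ((intervalIntegrable_iff_integrableOn_Ioc_of_le hab).1 hg)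

lemma intervalIntegrable_comp_const_sub {G : Type*} [NormedAddCommGroup G] {g : ℝ → G} {t : ℝ}
    (hg : IntervalIntegrable g volume 0 t) :
    IntervalIntegrable (fun τ => g (t - τ)) volume 0 t := by
  simpa using (hg.comp_sub_left t).symm

section Volterra

variable {E F : Type*} [NormedAddCommGroup E] [NormedSpace ℝ E]
  [NormedAddCommGroup F] [NormedSpace ℝ F]

/-- The Volterra (one-sided) convolution `(k * g)(t) = ∫_0^t k(t - τ) g(τ) dτ` of an
operator-valued kernel `k` with a vector-valued function `g`. -/
noncomputable def volterra (k : ℝ → E →L[ℝ] F) (g : ℝ → E) (t : ℝ) : F :=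
  ∫ τ in (0:ℝ)..t, k (t - τ) (g τ)

variable {k : ℝ → E →L[ℝ] F} {f f' g : ℝ → E} {t T : ℝ}

lemma intervalIntegrable_clm_apply {a b : ℝ} (hk : IntervalIntegrable k volume a b)
    (hg : ContinuousOn g (uIcc a b)) :
    IntervalIntegrable (fun s => k s (g s)) volume a b := by
  obtain ⟨C, hC⟩ := isCompact_uIcc.exists_bound_of_continuousOn hg
  have hgm : AEStronglyMeasurable g (volume.restrict (uIoc a b)) :=
    (hg.mono uIoc_subset_uIcc).aestronglyMeasurable measurableSet_uIoc
  rw [intervalIntegrable_iff] at hk ⊢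
  refine (hk.norm.mul_const C).mono'
    ((ContinuousLinearMap.id ℝ (E →L[ℝ] F)).aestronglyMeasurable_comp₂
      hk.aestronglyMeasurable hgm) ?_
  filter_upwards [ae_restrict_mem measurableSet_uIoc] with s hs
  exact (k s).le_opNorm_of_le (hC s (uIoc_subset_uIcc hs))

lemma volterra_eq_integral_indicator (ht : t ∈ Icc 0 T) :
    volterra k g t =
      ∫ τ, (Ioc 0 T).indicator k (t - τ) ((Ioc 0 T).indicator g τ) := by
  rw [volterra, integral_of_le ht.1, integral_Ioc_eq_integral_Ioo,
    ← MeasureTheory.integral_indicator measurableSet_Ioo]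
  congr 1 with τ
  by_cases hτ : τ ∈ Ioo 0 t
  · have hs : t - τ ∈ Ioc 0 T := ⟨sub_pos.2 hτ.2, by linarith [hτ.1, ht.2]⟩
    simp only [indicator_of_mem hτ, indicator_of_mem hs,
      indicator_of_mem (show τ ∈ Ioc 0 T from ⟨hτ.1, hτ.2.le.trans ht.2⟩)]
  · rw [indicator_of_notMem hτ]
    rcases le_or_gt τ 0 with h | h
    · rw [indicator_of_notMem (fun hmem : τ ∈ Ioc 0 T => h.not_gt hmem.1), map_zero]
    · have hs : t - τ ∉ Ioc 0 T := fun hs => hτ ⟨h, sub_pos.1 hs.1⟩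
      rw [indicator_of_notMem hs, zero_apply]

lemma integral_indicator_comp_sub_apply [CompleteSpace F] (hk : IntervalIntegrable k volume 0 T)
    {τ : ℝ} (hτ : τ ∈ Icc 0 T) (v : E) :
    ∫ u in (0:ℝ)..T, (Ioc 0 T).indicator k (u - τ) v = (∫ s in (0:ℝ)..T - τ, k s) v := by
  have hT : 0 ≤ T := hτ.1.trans hτ.2
  have hkT := integrable_indicator_Ioc_of_intervalIntegrable hT hk
  rw [integral_comp_sub_right (fun s => (Ioc 0 T).indicator k s v), zero_sub,
    ← ContinuousLinearMap.intervalIntegral_apply hkT.intervalIntegrable,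
    integral_of_le (by linarith), integral_of_le (sub_nonneg.2 hτ.2),
    setIntegral_indicator measurableSet_Ioc, Ioc_inter_Ioc,
    sup_eq_right.2 (neg_nonpos.2 hτ.1), inf_eq_left.2 (sub_le_self T hτ.1)]

lemma integral_volterra [CompleteSpace F] (hT : 0 ≤ T) (hk : IntervalIntegrable k volume 0 T)
    (hg : IntervalIntegrable g volume 0 T) :
    ∫ u in (0:ℝ)..T, volterra k g u = volterra (fun s => ∫ r in (0:ℝ)..s, k r) g T := by
  have hint := (integrable_indicator_Ioc_of_intervalIntegrable hT hg).convolution_integrand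
    (μ := volume) (ContinuousLinearMap.id ℝ (E →L[ℝ] F)).flip
    (integrable_indicator_Ioc_of_intervalIntegrable hT hk)
  calc ∫ u in (0:ℝ)..T, volterra k g u
      = ∫ u in (0:ℝ)..T, ∫ τ, (Ioc 0 T).indicator k (u - τ) ((Ioc 0 T).indicator g τ) :=
        integral_congr fun u hu => volterra_eq_integral_indicator (uIcc_of_le hT ▸ hu)
    _ = ∫ τ, ∫ u in (0:ℝ)..T, (Ioc 0 T).indicator k (u - τ) ((Ioc 0 T).indicator g τ) :=
        intervalIntegral_integral_swap
          (hint.mono_measure (Measure.prod_mono Measure.restrict_le_self le_rfl))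
    _ = ∫ τ, (Ioc 0 T).indicator (fun τ => (∫ r in (0:ℝ)..T - τ, k r) (g τ)) τ := by
        congr 1 with τ
        by_cases hτ : τ ∈ Ioc 0 T
        · simp only [indicator_of_mem hτ,
            integral_indicator_comp_sub_apply hk (Ioc_subset_Icc_self hτ)]
        · simp only [indicator_of_notMem hτ, map_zero, intervalIntegral.integral_zero]
    _ = volterra (fun s => ∫ r in (0:ℝ)..s, k r) g T := by
        rw [MeasureTheory.integral_indicator measurableSet_Ioc, volterra, integral_of_le hT]

lemma continuous_integral_clm_apply_comp_sub {C : ℝ} (hk : Integrable k)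
    (hg : AEStronglyMeasurable g) (hC : ∀ y, ‖g y‖ ≤ C) (hcont : ∀ᵐ y, ContinuousAt g y) :
    Continuous fun x => ∫ s, k s (g (x - s)) := by
  refine continuous_iff_continuousAt.2 fun x₀ => continuousAt_of_dominated
    (bound := fun s => ‖k s‖ * C) (.of_forall fun x => ?_)
    (.of_forall fun x => .of_forall fun s => (k s).le_opNorm_of_le (hC _)) (hk.norm.mul_const C) ?_
  · exact (ContinuousLinearMap.id ℝ (E →L[ℝ] F)).aestronglyMeasurable_comp₂ hk.aestronglyMeasurable
      (hg.comp_quasiMeasurePreserving (quasiMeasurePreserving_sub_left volume x))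
  · filter_upwards [(quasiMeasurePreserving_sub_left volume x₀).ae hcont] with s hs
    exact (k s).continuous.continuousAt.comp
      (ContinuousAt.comp (f := fun x => x - s) hs (by fun_prop))

lemma continuousOn_volterra (hT : 0 < T) (hk : IntervalIntegrable k volume 0 T)
    (hg : ContinuousOn g (Icc 0 T)) : ContinuousOn (volterra k g) (Icc 0 T) := by
  obtain ⟨C, hC⟩ := isCompact_Icc.exists_bound_of_continuousOn hg
  have hC₀ : 0 ≤ C := (norm_nonneg _).trans (hC 0 ⟨le_rfl, hT.le⟩)
  have hbound : ∀ y, ‖(Ioc 0 T).indicator g y‖ ≤ C := fun y => by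
    rw [norm_indicator_eq_indicator_norm]
    exact indicator_apply_le' (fun hy => hC y (Ioc_subset_Icc_self hy)) fun _ => hC₀
  have hcont : ∀ᵐ y, ContinuousAt ((Ioc 0 T).indicator g) y := by
    filter_upwards [Measure.ae_ne volume 0, Measure.ae_ne volume T] with y hy₀ hyT
    refine (hg.mono (interior_subset.trans Ioc_subset_Icc_self)).continuousAt_indicator fun hy => ?_
    rw [frontier_Ioc hT] at hy
    exact hy.elim hy₀ hyT
  have hconv := continuous_integral_clm_apply_comp_sub
    (integrable_indicator_Ioc_of_intervalIntegrable hT.le hk)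
    (integrable_indicator_Ioc_of_intervalIntegrable hT.le
      (hg.intervalIntegrable_of_Icc hT.le)).aestronglyMeasurable hbound hcont
  refine hconv.continuousOn.congr fun x hx => ?_
  rw [volterra_eq_integral_indicator hx, ← integral_sub_left_eq_self _ volume x]
  simp only [sub_sub_cancel]

lemma hasDerivAt_volterra_primitive [CompleteSpace F] (ht : t ∈ Ioo 0 T)
    (hk : IntervalIntegrable k volume 0 T) (hg : ContinuousOn g (Icc 0 T)) :
    HasDerivAt (volterra (fun s => ∫ r in (0:ℝ)..s, k r) g) (volterra k g t) t := by
  have hcont := continuousOn_volterra (ht.1.trans ht.2) hk hg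
  have hsub : ∀ x ∈ Icc 0 T, uIcc 0 x ⊆ Icc 0 T := fun x hx => by
    rw [uIcc_of_le hx.1]; exact Icc_subset_Icc_right hx.2
  have hftc : HasDerivAt (fun x => ∫ u in (0:ℝ)..x, volterra k g u) (volterra k g t) t :=
    integral_hasDerivAt_right (hcont.mono (hsub t (Ioo_subset_Icc_self ht))).intervalIntegrable
      ((hcont.mono Ioo_subset_Icc_self).stronglyMeasurableAtFilter isOpen_Ioo t ht)
      (hcont.continuousAt (Icc_mem_nhds ht.1 ht.2))
  refine hftc.congr_of_eventuallyEq ?_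
  filter_upwards [Ioo_mem_nhds ht.1 ht.2] with x hx
  have hx' := hsub x (Ioo_subset_Icc_self hx)
  exact (integral_volterra hx.1.le (hk.mono_set (by rwa [uIcc_of_le (ht.1.trans ht.2).le]))
    (hg.mono hx').intervalIntegrable).symm

lemma volterra_eq_add_of_hasDerivAt [CompleteSpace F] {K : ℝ → E →L[ℝ] F} (ht : 0 ≤ t)
    (hK : ContinuousOn K (Icc 0 t))
    (hKk : ∀ s ∈ Ioo 0 t, HasDerivAt K (k s) s) (hk : IntervalIntegrable k volume 0 t)
    (hf : ContinuousOn f (Icc 0 t)) (hff' : ∀ s ∈ Ioo 0 t, HasDerivAt f (f' s) s)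
    (hf' : ContinuousOn f' (Icc 0 t)) :
    volterra k f t = K t (f 0) - K 0 (f t) + volterra K f' t := by
  have hmaps : MapsTo (fun τ => t - τ) (Icc 0 t) (Icc 0 t) := fun τ hτ =>
    ⟨sub_nonneg.2 hτ.2, sub_le_self t hτ.1⟩
  have hKt : ContinuousOn (fun τ => K (t - τ)) (Icc 0 t) := hK.comp (by fun_prop) hmaps
  have hkf : IntervalIntegrable (fun τ => k (t - τ) (f τ)) volume 0 t :=
    intervalIntegrable_clm_apply (intervalIntegrable_comp_const_sub hk) (by rwa [uIcc_of_le ht])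
  have hKf' : IntervalIntegrable (fun τ => K (t - τ) (f' τ)) volume 0 t :=
    (hKt.clm_apply hf').intervalIntegrable_of_Icc ht
  have hderiv : ∀ τ ∈ Ioo 0 t, HasDerivAt (fun τ => K (t - τ) (f τ))
      (K (t - τ) (f' τ) - k (t - τ) (f τ)) τ := fun τ hτ => by
    have h := ((hKk (t - τ) ⟨sub_pos.2 hτ.2, sub_lt_self t hτ.1⟩).comp_const_sub t τ).clm_apply
      (hff' τ hτ)
    simpa [sub_eq_neg_add] using h
  have hparts := integral_eq_sub_of_hasDerivAt_of_le ht (hKt.clm_apply hf) hderiv (hKf'.sub hkf)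
  rw [integral_sub hKf' hkf, sub_self, sub_zero] at hparts
  rw [volterra, volterra, ← sub_eq_iff_eq_add, ← neg_sub, hparts, neg_sub]

end Volterra

section MittagLeffler

/- Compare the slopes of the convex function `log Γ` on `[x - 1, x]` and `[x, x + a]`. -/
lemma Gamma_mul_rpow_le_Gamma_add {x a : ℝ} (hx : 1 < x) (ha : 0 < a) :
    Gamma x * (x - 1) ^ a ≤ Gamma (x + a) := by
  have hx₁ : 0 < x - 1 := sub_pos.2 hx
  have hx₀ : 0 < x := one_pos.trans hx
  have hΓ : 0 < Gamma (x - 1) := Gamma_pos_of_pos hx₁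
  have hstep : log (Gamma x) - log (Gamma (x - 1)) = log (x - 1) := by
    rw [← sub_add_cancel x 1, Gamma_add_one hx₁.ne', log_mul hx₁.ne' (by simpa using hΓ.ne')]
    simp
  have hslope := convexOn_log_Gamma.slope_mono_adjacent hx₁ (add_pos hx₀ ha) (sub_one_lt x)
    (lt_add_of_pos_right x ha)
  simp only [Function.comp_apply, sub_sub_cancel, div_one, add_sub_cancel_left, hstep,
    le_div_iff₀ ha] at hslope
  rw [← log_le_log_iff (mul_pos (Gamma_pos_of_pos hx₀) (rpow_pos_of_pos hx₁ a))
    (Gamma_pos_of_pos (add_pos hx₀ ha)), log_mul (Gamma_pos_of_pos hx₀).ne'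
    (rpow_pos_of_pos hx₁ a).ne', log_rpow hx₁]
  linarith

lemma summable_pow_div_Gamma {α : ℝ} (hα : 0 < α) (β y : ℝ) :
    Summable fun n : ℕ => y ^ n / Gamma (β + n * α) := by
  have hx : Tendsto (fun n : ℕ => β + n * α) atTop atTop :=
    tendsto_atTop_add_const_left _ _ (tendsto_natCast_atTop_atTop.atTop_mul_const hα)
  have hpow : Tendsto (fun n : ℕ => (β + n * α - 1) ^ α) atTop atTop :=
    (tendsto_rpow_atTop hα).comp (tendsto_atTop_add_const_right _ _ hx)
  refine summable_of_ratio_norm_eventually_le (r := 1 / 2) (by norm_num) ?_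
  filter_upwards [hx.eventually_gt_atTop 1, hpow.eventually_ge_atTop (2 * |y|)] with n hn hny
  have hΓ : 0 < Gamma (β + n * α) := Gamma_pos_of_pos (by linarith)
  have hratio : 2 * |y| * Gamma (β + n * α) ≤ Gamma (β + (n + 1 : ℕ) * α) :=
    calc 2 * |y| * Gamma (β + n * α) ≤ Gamma (β + n * α) * (β + n * α - 1) ^ α := by
          rw [mul_comm]
          gcongr
      _ ≤ Gamma (β + n * α + α) := Gamma_mul_rpow_le_Gamma_add hn hα
      _ = Gamma (β + (n + 1 : ℕ) * α) := by
          congr 1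
          push_cast
          ring
  have hΓ' : 0 < Gamma (β + (n + 1 : ℕ) * α) :=
    Gamma_pos_of_pos (by push_cast; nlinarith)
  rw [norm_div, norm_div, norm_pow, norm_pow, Real.norm_of_nonneg hΓ.le,
    Real.norm_of_nonneg hΓ'.le, norm_eq_abs, div_le_iff₀ hΓ', pow_succ]
  calc |y| ^ n * |y| = 1 / 2 * (|y| ^ n / Gamma (β + n * α)) * (2 * |y| * Gamma (β + n * α)) := by
        field_simp
    _ ≤ _ := by gcongr

variable {E : Type*} [NormedAddCommGroup E] [NormedSpace ℝ E] {α β s : ℝ}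

/-- The Mittag-Leffler kernel `K_β(s) = s ^ (β - 1) E_{α,β}(s ^ α A)`, on which differentiation
lowers `β` by one. For `β < 1` it may be singular at `0`, where its value here is the junk `0`. -/
noncomputable def mlKernel (α β : ℝ) (A : E →L[ℝ] E) (s : ℝ) : E →L[ℝ] E :=
  s ^ (β - 1) • opML α β A s

lemma mlKernel_add_one_zero (α : ℝ) (hβ : β ≠ 0) (A : E →L[ℝ] E) :
    mlKernel α (β + 1) A 0 = 0 := by
  rw [mlKernel, add_sub_cancel_right, zero_rpow hβ, zero_smul]

lemma norm_clm_pow_le (A : E →L[ℝ] E) (n : ℕ) : ‖A ^ n‖ ≤ ‖A‖ ^ n := by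
  rcases n.eq_zero_or_pos with rfl | hn
  · rw [pow_zero, pow_zero]
    exact ContinuousLinearMap.norm_id_le
  · exact norm_pow_le' A hn

lemma norm_opML_term_le (hα : 0 ≤ α) (β : ℝ) (A : E →L[ℝ] E) {R : ℝ} (hs : s ∈ Icc 0 R) (n : ℕ) :
    ‖(s ^ ((n : ℝ) * α) / Gamma (β + n * α)) • A ^ n‖ ≤
      ‖(R ^ α * ‖A‖) ^ n / Gamma (β + n * α)‖ := by
  have hR : 0 ≤ R := hs.1.trans hs.2
  have hpow : s ^ ((n : ℝ) * α) ≤ (R ^ α) ^ n := by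
    rw [← rpow_natCast, ← rpow_mul hR, mul_comm α]
    gcongr
    exacts [hs.1, hs.2]
  rw [norm_smul, norm_div, norm_div, norm_of_nonneg (rpow_nonneg hs.1 _),
    norm_of_nonneg (pow_nonneg (mul_nonneg (rpow_nonneg hR α) (norm_nonneg A)) n), mul_pow,
    div_mul_eq_mul_div]
  have hA := norm_clm_pow_le A n
  gcongr

variable [CompleteSpace E]

lemma continuousOn_opML (hα : 0 < α) (β : ℝ) (A : E →L[ℝ] E) :
    ContinuousOn (opML α β A) (Ici 0) := by
  have hIcc : ∀ R, ContinuousOn (opML α β A) (Icc 0 R) := fun R =>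
    continuousOn_tsum
      (fun n => (((Real.continuous_rpow_const (by positivity)).div_const _).smul
        continuous_const).continuousOn)
      (summable_pow_div_Gamma hα β (R ^ α * ‖A‖)).norm
      fun n s hs => norm_opML_term_le hα.le β A hs n
  intro s hs
  rw [← continuousWithinAt_inter (Iic_mem_nhds (lt_add_one s)), Ici_inter_Iic]
  exact hIcc (s + 1) s ⟨hs, (lt_add_one s).le⟩

lemma hasSum_mlKernel (hα : 0 < α) (β : ℝ) (A : E →L[ℝ] E) (hs : 0 < s) :
    HasSum (fun n : ℕ => (s ^ (β - 1 + (n : ℝ) * α) / Gamma (β + n * α)) • A ^ n)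
      (mlKernel α β A s) := by
  have hsum : Summable fun n : ℕ => (s ^ ((n : ℝ) * α) / Gamma (β + n * α)) • A ^ n :=
    .of_norm_bounded (summable_pow_div_Gamma hα β (s ^ α * ‖A‖)).norm
      fun n => norm_opML_term_le hα.le β A ⟨hs.le, le_rfl⟩ n
  simpa only [rpow_add hs, mul_div_assoc, mul_smul, mlKernel, opML]
    using hsum.hasSum.const_smul (s ^ (β - 1))

lemma hasDerivAt_rpow_div_Gamma_add_one (hs : s ≠ 0) (γ : ℝ) :
    HasDerivAt (fun z : ℝ => z ^ γ / Gamma (γ + 1)) (s ^ (γ - 1) / Gamma γ) s := by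
  have h := (hasDerivAt_rpow_const (p := γ) (Or.inl hs)).div_const (Gamma (γ + 1))
  rcases eq_or_ne γ 0 with rfl | hγ
  · simpa using h
  · rw [Gamma_add_one hγ, mul_div_mul_left _ _ hγ] at h
    rwa [Gamma_add_one hγ]

lemma hasDerivAt_mlKernel (hα : 0 < α) (β : ℝ) (A : E →L[ℝ] E) (hs : 0 < s) :
    HasDerivAt (mlKernel α (β + 1) A) (mlKernel α β A s) s := by
  have hU : s ∈ Ioo (s / 2) (2 * s) := ⟨by linarith, by linarith⟩
  have hpos : ∀ z ∈ Icc (s / 2) (2 * s), 0 < z := fun z hz => by linarith [hz.1]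
  obtain ⟨C, hC⟩ := (isCompact_Icc (a := s / 2) (b := 2 * s)).exists_bound_of_continuousOn
    (f := fun z : ℝ => z ^ (β - 1)) fun z hz =>
      (continuousAt_rpow_const z _ (Or.inl (hpos z hz).ne')).continuousWithinAt
  have hterm : ∀ (n : ℕ), ∀ z ∈ Ioo (s / 2) (2 * s),
      HasDerivAt (fun z : ℝ => (z ^ (β + 1 - 1 + (n : ℝ) * α) / Gamma (β + 1 + n * α)) • A ^ n)
        ((z ^ (β - 1 + (n : ℝ) * α) / Gamma (β + n * α)) • A ^ n) z := fun n z hz => by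
    rw [add_sub_cancel_right, add_right_comm β 1, sub_add_eq_add_sub]
    exact (hasDerivAt_rpow_div_Gamma_add_one (hpos z (Ioo_subset_Icc_self hz)).ne'
      (β + n * α)).smul_const (A ^ n)
  have hbound : ∀ (n : ℕ), ∀ z ∈ Ioo (s / 2) (2 * s),
      ‖(z ^ (β - 1 + (n : ℝ) * α) / Gamma (β + n * α)) • A ^ n‖ ≤
        C * ‖((2 * s) ^ α * ‖A‖) ^ n / Gamma (β + n * α)‖ := fun n z hz => by
    have hz' := Ioo_subset_Icc_self hz
    rw [rpow_add (hpos z hz'), mul_div_assoc, mul_smul, norm_smul]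
    exact mul_le_mul (hC z hz') (norm_opML_term_le hα.le β A ⟨(hpos z hz').le, hz'.2⟩ n)
      (norm_nonneg _) ((norm_nonneg _).trans (hC z hz'))
  have hderiv := hasDerivAt_tsum_of_isPreconnected
    ((summable_pow_div_Gamma hα β ((2 * s) ^ α * ‖A‖)).norm.mul_left C) isOpen_Ioo
    isPreconnected_Ioo hterm hbound hU (hasSum_mlKernel hα (β + 1) A hs).summable hU
  rw [(hasSum_mlKernel hα β A hs).tsum_eq] at hderiv
  refine hderiv.congr_of_eventuallyEq ?_
  filter_upwards [Ioi_mem_nhds hs] with z hz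
  exact (hasSum_mlKernel hα (β + 1) A hz).tsum_eq.symm

lemma mlKernel_eq_add (hα : 0 < α) (β : ℝ) (A : E →L[ℝ] E) (hs : 0 < s) :
    mlKernel α β A s = (s ^ (β - 1) / Gamma β) • 1 + A * mlKernel α (β + α) A s := by
  have hsum := hasSum_mlKernel hα β A hs
  have htail : ∀ n : ℕ, (s ^ (β - 1 + ((n + 1 : ℕ) : ℝ) * α) / Gamma (β + (n + 1 : ℕ) * α)) •
      A ^ (n + 1) =
        A * (s ^ (β + α - 1 + (n : ℝ) * α) / Gamma (β + α + n * α)) • A ^ n := fun n => by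
    rw [mul_smul_comm, ← pow_succ']
    congr 3 <;> push_cast <;> ring
  rw [← hsum.tsum_eq, hsum.summable.tsum_eq_zero_add, tsum_congr htail,
    ((hasSum_mlKernel hα (β + α) A hs).mul_left A).tsum_eq]
  simp

lemma continuousOn_mlKernel (hα : 0 < α) (hβ : 1 ≤ β) (A : E →L[ℝ] E) :
    ContinuousOn (mlKernel α β A) (Ici 0) :=
  (Real.continuous_rpow_const (sub_nonneg.2 hβ)).continuousOn.smul (continuousOn_opML hα β A)

lemma intervalIntegrable_mlKernel (hα : 0 < α) (hβ : 0 < β) (A : E →L[ℝ] E) {t : ℝ} (ht : 0 ≤ t) :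
    IntervalIntegrable (mlKernel α β A) volume 0 t :=
  (intervalIntegrable_rpow' (by linarith)).smul_continuousOn
    ((continuousOn_opML hα β A).mono (by simpa [uIcc_of_le ht] using Icc_subset_Ici_self))

lemma integral_mlKernel (hα : 0 < α) (hβ : 0 < β) (A : E →L[ℝ] E) (hs : 0 ≤ s) :
    ∫ r in (0:ℝ)..s, mlKernel α β A r = mlKernel α (β + 1) A s := by
  rw [integral_eq_sub_of_hasDerivAt_of_le hs
    ((continuousOn_mlKernel hα (by linarith) A).mono Icc_subset_Ici_self)
    (fun r hr => hasDerivAt_mlKernel hα β A hr.1) (intervalIntegrable_mlKernel hα hβ A hs),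
    mlKernel_add_one_zero α hβ.ne', sub_zero]

end MittagLeffler

section Duhamel

variable {E : Type*} [NormedAddCommGroup E] [NormedSpace ℝ E] [CompleteSpace E]
  {α β t : ℝ} {f f' g : ℝ → E}

lemma hasDerivAt_volterra_mlKernel (hα : 0 < α) (hβ : 0 < β) (A : E →L[ℝ] E)
    (hg : ContinuousOn g (Ici 0)) (ht : 0 < t) :
    HasDerivAt (volterra (mlKernel α (β + 1) A) g) (volterra (mlKernel α β A) g t) t := by
  have htT : t ∈ Ioo 0 (t + 1) := ⟨ht, lt_add_one t⟩
  refine (hasDerivAt_volterra_primitive htT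
    (intervalIntegrable_mlKernel hα hβ A (htT.1.trans htT.2).le)
    (hg.mono Icc_subset_Ici_self)).congr_of_eventuallyEq ?_
  filter_upwards [Ioi_mem_nhds ht] with x hx
  refine integral_congr fun τ hτ => ?_
  rw [uIcc_of_le (le_of_lt hx)] at hτ
  simp only [integral_mlKernel hα hβ A (sub_nonneg.2 hτ.2)]

lemma volterra_mlKernel_eq_add_volterra_deriv (hα : 0 < α) (hβ : 0 < β) (A : E →L[ℝ] E)
    (hf : ContinuousOn f (Ici 0)) (hff' : ∀ τ, 0 < τ → HasDerivAt f (f' τ) τ)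
    (hf' : ContinuousOn f' (Ici 0)) (ht : 0 ≤ t) :
    volterra (mlKernel α β A) f t =
      mlKernel α (β + 1) A t (f 0) + volterra (mlKernel α (β + 1) A) f' t := by
  have hparts := volterra_eq_add_of_hasDerivAt ht
    ((continuousOn_mlKernel hα (by linarith) A).mono Icc_subset_Ici_self)
    (fun _ hs => hasDerivAt_mlKernel hα β A hs.1)
    (intervalIntegrable_mlKernel hα hβ A ht) (hf.mono Icc_subset_Ici_self)
    (fun s hs => hff' s hs.1) (hf'.mono Icc_subset_Ici_self)
  rwa [mlKernel_add_one_zero α hβ.ne' A, zero_apply, sub_zero] at hparts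

lemma hasDerivAt_volterra_mlKernel_of_hasDerivAt (hα : 0 < α) (hβ : 0 < β) (A : E →L[ℝ] E)
    (hf : ContinuousOn f (Ici 0)) (hff' : ∀ τ, 0 < τ → HasDerivAt f (f' τ) τ)
    (hf' : ContinuousOn f' (Ici 0)) (ht : 0 < t) :
    HasDerivAt (volterra (mlKernel α β A) f)
      (mlKernel α β A t (f 0) + volterra (mlKernel α β A) f' t) t := by
  have hboundary : HasDerivAt (fun x => mlKernel α (β + 1) A x (f 0)) (mlKernel α β A t (f 0)) t :=
    by simpa using (hasDerivAt_mlKernel hα β A ht).clm_apply (hasDerivAt_const t (f 0))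
  refine (hboundary.add (hasDerivAt_volterra_mlKernel hα hβ A hf' ht)).congr_of_eventuallyEq ?_
  filter_upwards [Ioi_mem_nhds ht] with x hx
  exact volterra_mlKernel_eq_add_volterra_deriv hα hβ A hf hff' hf' (le_of_lt hx)

lemma volterra_mlKernel_eq_add_clm (hα : 0 < α) (hβ : 0 < β) (A : E →L[ℝ] E)
    (hg : ContinuousOn g (Icc 0 t)) (ht : 0 ≤ t) :
    volterra (mlKernel α β A) g t =
      (1 / Gamma β) • (∫ τ in (0:ℝ)..t, (t - τ) ^ (β - 1) • g τ) +
        A (volterra (mlKernel α (β + α) A) g t) := by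
  have hpow : IntervalIntegrable (fun τ => (t - τ) ^ (β - 1) • g τ) volume 0 t :=
    (intervalIntegrable_comp_const_sub (intervalIntegrable_rpow' (by linarith))).smul_continuousOn
      (by rwa [uIcc_of_le ht])
  have hker : IntervalIntegrable (fun τ => mlKernel α (β + α) A (t - τ) (g τ)) volume 0 t :=
    intervalIntegrable_clm_apply
      (intervalIntegrable_comp_const_sub (intervalIntegrable_mlKernel hα (add_pos hβ hα) A ht))
      (by rwa [uIcc_of_le ht])
  have hAker : IntervalIntegrable (fun τ => A (mlKernel α (β + α) A (t - τ) (g τ))) volume 0 t :=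
    ⟨A.integrable_comp hker.1, A.integrable_comp hker.2⟩
  rw [volterra, volterra, ← A.intervalIntegral_comp_comm hker, ← intervalIntegral.integral_smul,
    ← integral_add (f := fun τ => (1 / Gamma β) • (t - τ) ^ (β - 1) • g τ) (hpow.smul _) hAker]
  refine integral_congr_ae ?_
  filter_upwards [Measure.ae_ne volume t] with τ hτt hτ
  rw [uIoc_of_le ht] at hτ
  rw [mlKernel_eq_add hα β A (sub_pos.2 (hτ.2.lt_of_ne hτt))]
  simp only [add_apply, smul_apply, one_apply_eq_self, mul_apply_eq_comp, smul_smul,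
    one_div_mul_eq_div]

theorem second_deriv_duhamel_general (hα : 1 < α) (A : E →L[ℝ] E)
    (hf : ContinuousOn f (Ici 0)) (hff' : ∀ τ, 0 < τ → HasDerivAt f (f' τ) τ)
    (hf' : ContinuousOn f' (Ici 0)) (ht : 0 < t) :
    iteratedDeriv 2 (fun s => ∫ τ in (0:ℝ)..s, (s - τ) ^ (α - 1) • opML α α A (s - τ) (f τ)) t
      = (1 / Gamma (α - 1)) • (∫ τ in (0:ℝ)..t, (t - τ) ^ (α - 2) • f' τ)
        + (t ^ (α - 2) / Gamma (α - 1)) • f 0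
        + A (∫ τ in (0:ℝ)..t, (t - τ) ^ (2 * α - 3) • opML α (2 * α - 2) A (t - τ) (f τ)) := by
  have hα₀ : 0 < α := one_pos.trans hα
  have hβ : 0 < α - 1 := sub_pos.2 hα
  have hfirst : deriv (volterra (mlKernel α α A) f) =ᶠ[𝓝 t] volterra (mlKernel α (α - 1) A) f := by
    filter_upwards [Ioi_mem_nhds ht] with x hx
    simpa using (hasDerivAt_volterra_mlKernel hα₀ hβ A hf hx).deriv
  have hsecond := hasDerivAt_volterra_mlKernel_of_hasDerivAt hα₀ hβ A hf hff' hf' ht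
  have hparts := volterra_mlKernel_eq_add_volterra_deriv hα₀ (by linarith : 0 < 2 * α - 2) A
    hf hff' hf' ht.le
  calc _ = iteratedDeriv 2 (volterra (mlKernel α α A) f) t := rfl
    _ = mlKernel α (α - 1) A t (f 0) + volterra (mlKernel α (α - 1) A) f' t := by
      rw [iteratedDeriv_succ, iteratedDeriv_one, hfirst.deriv_eq, hsecond.deriv]
    _ = (1 / Gamma (α - 1)) • (∫ τ in (0:ℝ)..t, (t - τ) ^ (α - 2) • f' τ)
        + (t ^ (α - 2) / Gamma (α - 1)) • f 0 + A (volterra (mlKernel α (2 * α - 2) A) f t) := by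
      rw [mlKernel_eq_add hα₀ (α - 1) A ht, volterra_mlKernel_eq_add_clm hα₀ hβ A
        (hf'.mono Icc_subset_Ici_self) ht.le, hparts, map_add,
        show α - 1 + α = 2 * α - 2 + 1 by ring, show α - 1 - 1 = α - 2 by ring]
      simp only [add_apply, smul_apply, one_apply_eq_self, mul_apply_eq_comp]
      abel
    _ = _ := by
      simp only [volterra, mlKernel, smul_apply, show 2 * α - 2 - 1 = 2 * α - 3 by ring]

end Duhamel

/-- Second derivative of the fractional Duhamel term: for `1 < α < 2`, `f ∈ C¹`, `t > 0`,
`d²/dt² ∫_0^t (t-τ)^{α-1} E_{α,α}((t-τ)^α A) f(τ) dτ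
 = J^{α-1} f'(t) + f(0) t^{α-2}/Γ(α-1)
   + A ∫_0^t (t-τ)^{2α-3} E_{α,2α-2}((t-τ)^α A) f(τ) dτ`. -/
theorem second_deriv_duhamel {E : Type*} [NormedAddCommGroup E] [NormedSpace ℝ E]
    [CompleteSpace E]
    (α : ℝ) (hα₁ : 1 < α) (hα₂ : α < 2) (A : E →L[ℝ] E)
    (f : ℝ → E) (hf : ContDiff ℝ 1 f) (t : ℝ) (ht : 0 < t) :
    iteratedDeriv 2 (fun s => ∫ τ in (0:ℝ)..s, (s - τ) ^ (α - 1) • opML α α A (s - τ) (f τ)) t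
      = (1 / Real.Gamma (α - 1)) • (∫ τ in (0:ℝ)..t, (t - τ) ^ (α - 2) • deriv f τ)
        + (t ^ (α - 2) / Real.Gamma (α - 1)) • f 0
        + A (∫ τ in (0:ℝ)..t, (t - τ) ^ (2 * α - 3) • opML α (2 * α - 2) A (t - τ) (f τ)) :=
  second_deriv_duhamel_general hα₁ A hf.continuous.continuousOn
    (fun τ _ => (hf.differentiable one_ne_zero τ).hasDerivAt)
    (hf.continuous_deriv le_rfl).continuousOn ht
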